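/- arXiv:2011.13967 — 5 statements merged into one kernel-verified Lean document; each statement's English description precedes it below -/
import Mathlib

section
/- Let α > 0 and k be real numbers with 0 ≤ k ≤ α, and let λ > 0. Then for every real x ≥ 1, (λ · x^{k}) / (λ + x^{-2α}) ≤ λ^{1/2 - k/(2α)} · x^{α}. Equivalently, by Young's inequality for products, x^{k-α} · λ^{1/2 + k/(2α)} ≤ ((α-k)/(2α)) · x^{-2α} + ((α+k)/(2α)) · λ. -/
/-- For real numbers `α > 0`, `0 ≤ k ≤ α`, `λ > 0` and every real `x ≥ 1`,
`(λ·x^k)/(λ + x^(-2α)) ≤ λ^(1/2 - k/(2α)) · x^α`, and (equivalently, by Young's inequality)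
`x^(k-α) · λ^(1/2 + k/(2α)) ≤ ((α-k)/(2α))·x^(-2α) + ((α+k)/(2α))·λ`. -/
theorem stmt2 (α k lam : ℝ) (hα : 0 < α) (hk0 : 0 ≤ k) (hkα : k ≤ α) (hlam : 0 < lam) :
    ∀ x : ℝ, 1 ≤ x →
      lam * x ^ k / (lam + x ^ (-(2 * α))) ≤ lam ^ (1 / 2 - k / (2 * α)) * x ^ α ∧
      x ^ (k - α) * lam ^ (1 / 2 + k / (2 * α)) ≤
        ((α - k) / (2 * α)) * x ^ (-(2 * α)) + ((α + k) / (2 * α)) * lam := by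
  intro x hx
  have hx0 : 0 < x := by linarith
  have hy : 0 < x ^ (-(2 * α)) := Real.rpow_pos_of_pos hx0 _
  have hw₁ : 0 ≤ (α - k) / (2 * α) := div_nonneg (by linarith) (by linarith)
  have hw₂ : 0 ≤ (α + k) / (2 * α) := div_nonneg (by linarith) (by linarith)
  have hw : (α - k) / (2 * α) + (α + k) / (2 * α) = 1 := by field_simp; ring
  have young : x ^ (k - α) * lam ^ (1 / 2 + k / (2 * α)) ≤
      ((α - k) / (2 * α)) * x ^ (-(2 * α)) + ((α + k) / (2 * α)) * lam := by
    have h := Real.geom_mean_le_arith_mean2_weighted hw₁ hw₂ hy.le hlam.le hw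
    have hx_exp : -(2 * α) * ((α - k) / (2 * α)) = k - α := by field_simp; ring
    have hlam_exp : (α + k) / (2 * α) = 1 / 2 + k / (2 * α) := by field_simp
    rw [← hlam_exp]
    rwa [← Real.rpow_mul hx0.le, hx_exp] at h
  refine ⟨?_, young⟩
  have hsum : x ^ (k - α) * lam ^ (1 / 2 + k / (2 * α)) ≤ lam + x ^ (-(2 * α)) := by
    nlinarith [mul_nonneg hw₂ hy.le, mul_nonneg hw₁ hlam.le]
  have hx_split : x ^ k = x ^ α * x ^ (k - α) := by
    rw [← Real.rpow_add hx0, add_sub_cancel]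
  have hlam_split : lam = lam ^ (1 / 2 - k / (2 * α)) * lam ^ (1 / 2 + k / (2 * α)) := by
    rw [← Real.rpow_add hlam, sub_add_add_cancel, add_halves, Real.rpow_one]
  rw [div_le_iff₀ (by positivity)]
  calc lam * x ^ k
      = lam ^ (1 / 2 - k / (2 * α)) * x ^ α *
          (x ^ (k - α) * lam ^ (1 / 2 + k / (2 * α))) := by
        rw [hx_split]
        linear_combination (x ^ α * x ^ (k - α)) * hlam_split
    _ ≤ lam ^ (1 / 2 - k / (2 * α)) * x ^ α * (lam + x ^ (-(2 * α))) := by gcongr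
end

section
/- Let α > 0 and k be real numbers with 0 ≤ k ≤ α, let c > 0, let λ > 0, let μ : ℕ → ℝ satisfy μ_i ≥ c · i^{-2α} for every i ≥ 1, and let f : ℕ → ℝ. Then Σ_{i=1}^∞ (λ/(λ + μ_i)) · i^{k} · |f_i| ≤ (1/min(1,c)) · λ^{1/2 - k/(2α)} · Σ_{i=1}^∞ i^{α} · |f_i|, where both sides are sums of nonnegative terms (possibly infinite). -/
/-- Young-type interpolation bound `a * s ^ θ ≤ a ^ θ * (a + s)` for `θ ∈ [0, 1]`. -/
lemma mul_rpow_le_rpow_mul_add {a s θ : ℝ} (ha : 0 < a) (hs : 0 ≤ s) (h0 : 0 ≤ θ)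
    (h1 : θ ≤ 1) : a * s ^ θ ≤ a ^ θ * (a + s) := by
  have amgm : a ^ (1 - θ) * s ^ θ ≤ a + s := by
    have := Real.geom_mean_le_arith_mean2_weighted (sub_nonneg.2 h1) h0 ha.le hs
      (sub_add_cancel 1 θ)
    nlinarith
  calc a * s ^ θ = a ^ θ * (a ^ (1 - θ) * s ^ θ) := by
        rw [← mul_assoc, ← Real.rpow_add ha, add_sub_cancel, Real.rpow_one]
    _ ≤ a ^ θ * (a + s) := by gcongr

/-- The bias filter bound at a single frequency `x`. -/
lemma div_add_mul_rpow_le {α k c a x m : ℝ} (hα : 0 < α) (hk0 : 0 ≤ k) (hkα : k ≤ α)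
    (hc : 0 < c) (ha : 0 < a) (hx : 0 < x) (hm : c * x ^ (-(2 * α)) ≤ m) :
    a / (a + m) * x ^ k ≤ 1 / min 1 c * a ^ (1 / 2 - k / (2 * α)) * x ^ α := by
  set θ := 1 / 2 - k / (2 * α) with hθ
  set s := x ^ (-(2 * α)) with hs
  have hs0 : 0 < s := Real.rpow_pos_of_pos hx _
  have hmin : 0 < min 1 c := lt_min one_pos hc
  have hθ0 : 0 ≤ θ := by
    rw [hθ, sub_nonneg, div_le_div_iff₀ (by positivity) two_pos]
    linarith
  have hθ1 : θ ≤ 1 := by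
    have : 0 ≤ k / (2 * α) := by positivity
    linarith
  have hden : min 1 c * (a + s) ≤ a + m := by
    nlinarith [min_le_left 1 c, min_le_right 1 c]
  have hxk : x ^ k = s ^ θ * x ^ α := by
    rw [hs, ← Real.rpow_mul hx.le, ← Real.rpow_add hx, hθ]
    congr 1
    field_simp
    ring
  calc a / (a + m) * x ^ k ≤ a / (min 1 c * (a + s)) * x ^ k := by gcongr
    _ = 1 / min 1 c * (a * s ^ θ / (a + s)) * x ^ α := by
        rw [hxk]
        field_simp
    _ ≤ 1 / min 1 c * a ^ θ * x ^ α := by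
        gcongr
        rw [div_le_iff₀ (by positivity)]
        exact mul_rpow_le_rpow_mul_add ha hs0.le hθ0 hθ1

/-- Coefficient-wise bias bound for kernels with polynomially decaying
eigenvalues: if `μ_i ≥ c·i^(-2α)` for all `i ≥ 1`, then
`Σ_{i≥1} (λ/(λ+μ_i))·i^k·|f_i| ≤ (1/min(1,c))·λ^(1/2-k/(2α))·Σ_{i≥1} i^α·|f_i|`,
as sums of nonnegative extended reals. -/
theorem stmt3 (α k c lam : ℝ) (hα : 0 < α) (hk0 : 0 ≤ k) (hkα : k ≤ α)
    (hc : 0 < c) (hlam : 0 < lam) (μ f : ℕ → ℝ)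
    (hμ : ∀ i : ℕ, 1 ≤ i → c * (i : ℝ) ^ (-(2 * α)) ≤ μ i) :
    ∑' i : ℕ, ENNReal.ofReal
        ((lam / (lam + μ (i + 1))) * ((i + 1 : ℕ) : ℝ) ^ k * |f (i + 1)|)
      ≤ ENNReal.ofReal ((1 / min 1 c) * lam ^ (1 / 2 - k / (2 * α))) *
          ∑' i : ℕ, ENNReal.ofReal (((i + 1 : ℕ) : ℝ) ^ α * |f (i + 1)|) := by
  have hmin : 0 < min 1 c := lt_min one_pos hc
  rw [← ENNReal.tsum_mul_left]
  refine ENNReal.tsum_le_tsum fun i => ?_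
  rw [← ENNReal.ofReal_mul (by positivity), ← mul_assoc]
  refine ENNReal.ofReal_le_ofReal (mul_le_mul_of_nonneg_right ?_ (abs_nonneg _))
  exact div_add_mul_rpow_le hα hk0 hkα hc hlam (by positivity) (hμ (i + 1) (by lia))
end

section
/- Let m ∈ ℕ (including 0) and let α be a real number with α > m + 1/2. There exists a constant c > 0 (depending only on α and m) such that for every λ ∈ (0,1], Σ_{i=1}^∞ i^{2m} / (1 + λ · i^{2α}) ≥ c · λ^{-(2m+1)/(2α)}. -/
/-- Discrete mean value inequality for `x ↦ x ^ (k + 1)` on `[n, n + 1]`. -/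
theorem succ_pow_succ_le (n k : ℕ) :
    ((n : ℝ) + 1) ^ (k + 1) ≤ (n : ℝ) ^ (k + 1) + (k + 1) * ((n : ℝ) + 1) ^ k := by
  induction k with
  | zero => simp
  | succ k ih =>
    have hmul := mul_le_mul_of_nonneg_left ih (by positivity : (0 : ℝ) ≤ (n : ℝ) + 1)
    have hmono : (n : ℝ) ^ (k + 1) ≤ ((n : ℝ) + 1) ^ (k + 1) := by gcongr; linarith
    push_cast
    calc ((n : ℝ) + 1) ^ (k + 1 + 1) = ((n : ℝ) + 1) * ((n : ℝ) + 1) ^ (k + 1) := by ring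
      _ ≤ ((n : ℝ) + 1) * ((n : ℝ) ^ (k + 1) + (k + 1) * ((n : ℝ) + 1) ^ k) := hmul
      _ = (n : ℝ) ^ (k + 1 + 1) + (n : ℝ) ^ (k + 1)
            + ((k : ℝ) + 1) * ((n : ℝ) + 1) ^ (k + 1) := by ring
      _ ≤ _ := by linarith

/-- The power sum `1 ^ k + ⋯ + N ^ k` is at least `∫₀ᴺ x ^ k = N ^ (k + 1) / (k + 1)`. -/
theorem pow_succ_le_mul_sum_pow (N k : ℕ) :
    (N : ℝ) ^ (k + 1) ≤ (k + 1) * ∑ i ∈ Finset.range N, ((i : ℝ) + 1) ^ k := by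
  induction N with
  | zero => simp
  | succ n ih =>
    rw [Finset.sum_range_succ]
    have := succ_pow_succ_le n k
    push_cast
    linarith

/-- For `m ∈ ℕ` and real `α > m + 1/2`, there is `c > 0` such that for all
`λ ∈ (0,1]`, `Σ_{i≥1} i^(2m)/(1 + λ·i^(2α)) ≥ c·λ^(-(2m+1)/(2α))`. -/
theorem stmt5 (m : ℕ) (α : ℝ) (hα : (m : ℝ) + 1 / 2 < α) :
    ∃ c : ℝ, 0 < c ∧ ∀ lam : ℝ, lam ∈ Set.Ioc (0 : ℝ) 1 →
      ENNReal.ofReal (c * lam ^ (-((2 * (m : ℝ) + 1) / (2 * α))))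
        ≤ ∑' i : ℕ, ENNReal.ofReal
            (((i + 1 : ℕ) : ℝ) ^ (2 * (m : ℝ)) / (1 + lam * ((i + 1 : ℕ) : ℝ) ^ (2 * α))) := by
  have hα0 : 0 < α := by have := m.cast_nonneg (α := ℝ); linarith
  refine ⟨1 / (2 * (2 * m + 1) * 2 ^ (2 * m + 1)), by positivity, ?_⟩
  rintro lam ⟨h0, h1⟩
  set X : ℝ := lam ^ (-(1 / (2 * α))) with hX
  have hX0 : 0 < X := Real.rpow_pos_of_pos h0 _
  have hX1 : 1 ≤ X := Real.one_le_rpow_of_pos_of_le_one_of_nonpos h0 h1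
    (neg_nonpos.mpr (by positivity))
  have hXpow : lam ^ (-((2 * (m : ℝ) + 1) / (2 * α))) = X ^ (2 * m + 1) := by
    rw [hX, ← Real.rpow_natCast, ← Real.rpow_mul h0.le]
    congr 1
    push_cast
    ring
  have hXα : lam * X ^ (2 * α) = 1 := by
    rw [hX, ← Real.rpow_mul h0.le,
      show -(1 / (2 * α)) * (2 * α) = -1 by field_simp, Real.rpow_neg_one,
      mul_inv_cancel₀ h0.ne']
  set N := ⌊X⌋₊
  have hN1 : (1 : ℝ) ≤ N := by exact_mod_cast (Nat.one_le_floor_iff X).mpr hX1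
  have hNX : (N : ℝ) ≤ X := Nat.floor_le hX0.le
  have hXN : X ≤ 2 * N := by linarith [Nat.lt_floor_add_one X]
  refine le_trans ?_ (ENNReal.sum_le_tsum (Finset.range N))
  rw [← ENNReal.ofReal_sum_of_nonneg (fun i _ => by positivity)]
  apply ENNReal.ofReal_le_ofReal
  have hterm : ∀ i ∈ Finset.range N, ((i : ℝ) + 1) ^ (2 * m) / 2 ≤
      ((i + 1 : ℕ) : ℝ) ^ (2 * (m : ℝ)) / (1 + lam * ((i + 1 : ℕ) : ℝ) ^ (2 * α)) := by
    intro i hi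
    have hiX : ((i + 1 : ℕ) : ℝ) ≤ X :=
      le_trans (by exact_mod_cast Finset.mem_range.mp hi) hNX
    have hpow : lam * ((i + 1 : ℕ) : ℝ) ^ (2 * α) ≤ 1 := by
      rw [← hXα]
      gcongr
    have hnum : ((i + 1 : ℕ) : ℝ) ^ (2 * (m : ℝ)) = ((i : ℝ) + 1) ^ (2 * m) := by
      rw [← Real.rpow_natCast]
      push_cast
      rfl
    rw [hnum]
    gcongr
    linarith
  refine le_trans ?_ (Finset.sum_le_sum hterm)
  rw [← Finset.sum_div, hXpow]
  have hsum := pow_succ_le_mul_sum_pow N (2 * m)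
  push_cast at hsum
  have hXle : X ^ (2 * m + 1) ≤ 2 ^ (2 * m + 1) * (N : ℝ) ^ (2 * m + 1) := by
    rw [← mul_pow]
    gcongr
  rw [one_div_mul_eq_div, div_le_div_iff₀ (by positivity) two_pos]
  have := mul_le_mul_of_nonneg_left hsum (by positivity : (0 : ℝ) ≤ 2 ^ (2 * m + 1))
  linarith
end

section
/- Let m ∈ ℕ (including 0) and let α be a real number with α > m + 1/2. Let ψ_j denote the Fourier basis on [0,1] and set μ_j = j^{-2α} for j ≥ 1. There exists a constant c > 0 (depending only on α and m) such that for every λ ∈ (0,1] and every x ∈ [0,1], Σ_{j=1}^∞ (μ_j/(λ + μ_j)) · (ψ_j^{(m)}(x))² ≥ c · λ^{-(2m+1)/(2α)}. -/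
/-- The Fourier basis on `[0,1]`: `ψ_1(x) = 1`, `ψ_{2i}(x) = √2·cos(2πix)`,
`ψ_{2i+1}(x) = √2·sin(2πix)` for `i ≥ 1`. -/
noncomputable def fourierPsi (j : ℕ) : ℝ → ℝ :=
  if j = 1 then fun _ => 1
  else if j % 2 = 0 then fun x => Real.sqrt 2 * Real.cos (2 * Real.pi * ((j / 2 : ℕ) : ℝ) * x)
  else fun x => Real.sqrt 2 * Real.sin (2 * Real.pi * ((j / 2 : ℕ) : ℝ) * x)

/-- The squared `n`-th derivatives of cosine and sine add up to one. -/
lemma iteratedDeriv_cos_sq_add_iteratedDeriv_sin_sq (n : ℕ) (x : ℝ) :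
    iteratedDeriv n Real.cos x ^ 2 + iteratedDeriv n Real.sin x ^ 2 = 1 := by
  induction n with
  | zero => simp
  | succ n ih =>
    rw [Real.iteratedDeriv_add_one_sin, Real.iteratedDeriv_add_one_cos, Pi.neg_apply, neg_sq,
      add_comm, ih]

lemma iteratedDeriv_const_mul_comp_const_mul {f : ℝ → ℝ} {n : ℕ} (hf : ContDiff ℝ n f)
    (a ω x : ℝ) :
    iteratedDeriv n (fun y => a * f (ω * y)) x = a * (ω ^ n * iteratedDeriv n f (ω * x)) := by
  rw [iteratedDeriv_const_mul_field a (fun y => f (ω * y)), iteratedDeriv_comp_const_mul hf]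

lemma fourierPsi_two_mul (i : ℕ) :
    fourierPsi (2 * i) = fun x => √2 * Real.cos (2 * Real.pi * i * x) := by
  have h : 2 * i ≠ 1 := by omega
  simp [fourierPsi, h]

lemma fourierPsi_two_mul_add_one {i : ℕ} (hi : i ≠ 0) :
    fourierPsi (2 * i + 1) = fun x => √2 * Real.sin (2 * Real.pi * i * x) := by
  have h : (2 * i + 1) / 2 = i := by omega
  simp [fourierPsi, hi, h, Nat.add_mod]

lemma iteratedDeriv_fourierPsi_sq_add_sq (m : ℕ) {i : ℕ} (hi : i ≠ 0) (x : ℝ) :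
    iteratedDeriv m (fourierPsi (2 * i)) x ^ 2 + iteratedDeriv m (fourierPsi (2 * i + 1)) x ^ 2
      = 2 * (2 * Real.pi * i) ^ (2 * m) := by
  rw [fourierPsi_two_mul, fourierPsi_two_mul_add_one hi,
    iteratedDeriv_const_mul_comp_const_mul Real.contDiff_cos,
    iteratedDeriv_const_mul_comp_const_mul Real.contDiff_sin]
  simp only [mul_pow √2, Real.sq_sqrt zero_le_two, mul_pow (_ ^ m), ← mul_add,
    iteratedDeriv_cos_sq_add_iteratedDeriv_sin_sq]
  ring

lemma tsum_odd_add_even_succ_le_tsum (f : ℕ → ENNReal) :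
    ∑' i, (f (2 * i + 1) + f (2 * i + 2)) ≤ ∑' j, f j := by
  rw [ENNReal.tsum_add, ← tsum_even_add_odd (f := f) ENNReal.summable ENNReal.summable, add_comm]
  exact add_le_add_left
    (ENNReal.tsum_comp_le_tsum_of_injective (add_left_injective 1) fun i => f (2 * i)) _

/-- The weight `μ / (λ + μ)` at `μ = j ^ (-2α)` is bounded below while `j` is at most a constant
multiple of `λ ^ (-1 / (2α))`. -/
lemma div_add_rpow_ge {α lam C j : ℝ} (hα : 0 < α) (hlam : 0 < lam) (hC : 0 < C) (hj : 0 < j)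
    (hjC : j ≤ C * lam ^ (-(1 / (2 * α)))) :
    C ^ (-(2 * α)) / (1 + C ^ (-(2 * α))) ≤ j ^ (-(2 * α)) / (lam + j ^ (-(2 * α))) := by
  have hb : 0 < C ^ (-(2 * α)) := Real.rpow_pos_of_pos hC _
  have hμ : 0 < j ^ (-(2 * α)) := Real.rpow_pos_of_pos hj _
  have key : C ^ (-(2 * α)) * lam ≤ j ^ (-(2 * α)) := by
    have h := Real.rpow_le_rpow_of_nonpos hj hjC (by linarith : -(2 * α) ≤ 0)
    rwa [Real.mul_rpow hC.le (by positivity), ← Real.rpow_mul hlam.le,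
      show -(1 / (2 * α)) * -(2 * α) = 1 by field_simp, Real.rpow_one] at h
  rw [div_le_div_iff₀ (by positivity) (by positivity)]
  nlinarith

/-- For `m ∈ ℕ` and real `α > m + 1/2`, with `μ_j = j^(-2α)` and `ψ_j` the
Fourier basis on `[0,1]`, there is `c > 0` such that for every `λ ∈ (0,1]` and every
`x ∈ [0,1]`, `Σ_{j≥1} (μ_j/(λ+μ_j))·(ψ_j^{(m)}(x))² ≥ c·λ^(-(2m+1)/(2α))`. -/
theorem stmt6 (m : ℕ) (α : ℝ) (hα : (m : ℝ) + 1 / 2 < α) :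
    ∃ c : ℝ, 0 < c ∧ ∀ lam : ℝ, lam ∈ Set.Ioc (0 : ℝ) 1 → ∀ x ∈ Set.Icc (0 : ℝ) 1,
      ENNReal.ofReal (c * lam ^ (-((2 * (m : ℝ) + 1) / (2 * α))))
        ≤ ∑' j : ℕ, ENNReal.ofReal
            ((((j + 1 : ℕ) : ℝ) ^ (-(2 * α)) / (lam + ((j + 1 : ℕ) : ℝ) ^ (-(2 * α)))) *
              (iteratedDeriv m (fourierPsi (j + 1)) x) ^ 2) := by
  have hα0 : 0 < α := by linarith [(Nat.cast_nonneg m : (0 : ℝ) ≤ m)]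
  set a : ℝ := (10 : ℝ) ^ (-(2 * α)) / (1 + (10 : ℝ) ^ (-(2 * α)))
  have ha0 : 0 < a := by positivity
  refine ⟨a, ha0, fun lam ⟨hlam, hlam1⟩ x _ => ?_⟩
  set N : ℝ := lam ^ (-(1 / (2 * α))) with hN
  have hN1 : 1 ≤ N :=
    Real.one_le_rpow_of_pos_of_le_one_of_nonpos hlam hlam1 (neg_nonpos.2 (by positivity))
  have hNpow : lam ^ (-((2 * (m : ℝ) + 1) / (2 * α))) = N ^ (2 * m + 1) := by
    rw [hN, ← Real.rpow_natCast, ← Real.rpow_mul hlam.le]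
    push_cast
    ring_nf
  set K : ℕ := ⌈N⌉₊
  have hNK : N ≤ K := Nat.le_ceil N
  have hKN : (K : ℝ) ≤ 2 * N := by linarith [Nat.ceil_lt_add_one (zero_le_one.trans hN1)]
  have hweight : ∀ j : ℕ, 0 < j → j ≤ 5 * K →
      a ≤ (j : ℝ) ^ (-(2 * α)) / (lam + (j : ℝ) ^ (-(2 * α))) := fun j hj hjK => by
    have hjK' : (j : ℝ) ≤ 5 * K := by exact_mod_cast hjK
    exact div_add_rpow_ge hα0 hlam (by norm_num) (by exact_mod_cast hj) (by linarith)
  refine le_trans ?_ (tsum_odd_add_even_succ_le_tsum _)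
  refine le_trans ?_ (ENNReal.sum_le_tsum (Finset.Ico K (2 * K)))
  have hpair : ∀ i ∈ Finset.Ico K (2 * K), ENNReal.ofReal (a * N ^ (2 * m)) ≤
      ENNReal.ofReal ((((2 * i + 1 + 1 : ℕ) : ℝ) ^ (-(2 * α)) /
          (lam + ((2 * i + 1 + 1 : ℕ) : ℝ) ^ (-(2 * α)))) *
            (iteratedDeriv m (fourierPsi (2 * i + 1 + 1)) x) ^ 2) +
        ENNReal.ofReal ((((2 * i + 2 + 1 : ℕ) : ℝ) ^ (-(2 * α)) /
          (lam + ((2 * i + 2 + 1 : ℕ) : ℝ) ^ (-(2 * α)))) *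
            (iteratedDeriv m (fourierPsi (2 * i + 2 + 1)) x) ^ 2) := by
    intro i hi
    rw [Finset.mem_Ico] at hi
    rw [← ENNReal.ofReal_add (by positivity) (by positivity)]
    refine ENNReal.ofReal_le_ofReal ?_
    have hsq := iteratedDeriv_fourierPsi_sq_add_sq m i.succ_ne_zero x
    have hfreq : N ≤ 2 * Real.pi * (i.succ : ℝ) := by
      have hKi : (K : ℝ) ≤ i := by exact_mod_cast hi.1
      push_cast
      nlinarith [Real.pi_gt_three]
    calc a * N ^ (2 * m) ≤ a * (2 * (2 * Real.pi * (i.succ : ℝ)) ^ (2 * m)) := by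
          gcongr
          exact (pow_le_pow_left₀ (by positivity) hfreq _).trans
            (le_mul_of_one_le_left (by positivity) one_le_two)
      _ = a * iteratedDeriv m (fourierPsi (2 * i + 1 + 1)) x ^ 2 +
          a * iteratedDeriv m (fourierPsi (2 * i + 2 + 1)) x ^ 2 := by
          rw [← hsq, mul_add, Nat.mul_succ]
      _ ≤ _ := by
          gcongr
          · exact hweight _ (by omega) (by omega)
          · exact hweight _ (by omega) (by omega)
  refine le_trans ?_ (Finset.sum_le_sum hpair)
  rw [Finset.sum_const, Nat.card_Ico, ← ENNReal.ofReal_nsmul, hNpow, nsmul_eq_mul,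
    show 2 * K - K = K by omega]
  refine ENNReal.ofReal_le_ofReal ?_
  calc a * N ^ (2 * m + 1) = N * (a * N ^ (2 * m)) := by ring
    _ ≤ K * (a * N ^ (2 * m)) := by gcongr
end

section
/- Let n ≥ 1, let K be an n×n real positive semidefinite symmetric matrix, let λ > 0, and let f ∈ ℝⁿ. Let ε = (ε_1, ..., ε_n) be a random vector with independent N(0, σ₀²) coordinates (σ₀ > 0), and set Y = f + ε and σ̂²_n = λ · Yᵀ (K + nλ·I_n)^{-1} Y. Then Var(σ̂²_n) ≤ 2 σ₀⁴ / n + 4 σ₀² ‖f‖² / n², where ‖f‖ is the Euclidean norm of f. -/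
open Matrix MeasureTheory ProbabilityTheory
open scoped NNReal

/-- The derivative of the product of a polynomial with a centred Gaussian moment generating
function. -/
lemma deriv_polynomial_mul_exp_sq (v : ℝ) (p : Polynomial ℝ) :
    deriv (fun t : ℝ => p.eval t * Real.exp (v * t ^ 2 / 2)) =
      fun t => (p.derivative + Polynomial.C v * Polynomial.X * p).eval t *
        Real.exp (v * t ^ 2 / 2) := by
  ext t
  have hexp : HasDerivAt (fun t : ℝ => Real.exp (v * t ^ 2 / 2))
      (Real.exp (v * t ^ 2 / 2) * (v * t)) t := by
    have h : HasDerivAt (fun t : ℝ => v * t ^ 2 / 2) (v * t) t :=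
      (((hasDerivAt_pow 2 t).const_mul v).div_const 2).congr_deriv (by norm_num; ring)
    exact h.exp
  rw [((p.hasDerivAt t).fun_mul hexp).deriv]
  simp
  ring

lemma integral_pow_gaussianReal_zero (v : ℝ≥0) (k : ℕ) :
    ∫ x, x ^ k ∂gaussianReal 0 v =
      ((fun p : Polynomial ℝ => p.derivative + Polynomial.C (v : ℝ) * Polynomial.X * p)^[k]
        1).eval 0 := by
  have hderiv : iteratedDeriv k (mgf (fun x : ℝ => x) (gaussianReal 0 v)) = fun t =>
      ((fun p : Polynomial ℝ => p.derivative + Polynomial.C (v : ℝ) * Polynomial.X * p)^[k]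
        1).eval t * Real.exp (v * t ^ 2 / 2) := by
    rw [mgf_fun_id_gaussianReal]
    induction k with
    | zero => simp
    | succ k ih =>
      rw [iteratedDeriv_succ, ih, deriv_polynomial_mul_exp_sq, Function.iterate_succ_apply']
  have hmgf := iteratedDeriv_mgf_zero (X := fun x : ℝ => x) (μ := gaussianReal 0 v) (by simp) k
  rw [hderiv] at hmgf
  simpa using hmgf.symm

lemma integrable_pow_gaussianReal (m : ℝ) (v : ℝ≥0) (k : ℕ) :
    Integrable (fun x => x ^ k) (gaussianReal m v) := by
  exact integrable_pow_of_mem_interior_integrableExpSet (X := fun x : ℝ => x) (by simp) k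

lemma memLp_const_add_sq_gaussianReal (v : ℝ≥0) (c : ℝ) :
    MemLp (fun x => (c + x) ^ 2) 2 (gaussianReal 0 v) := by
  rw [memLp_two_iff_integrable_sq (by fun_prop)]
  have h (x : ℝ) : ((c + x) ^ 2) ^ 2 =
      c ^ 4 * x ^ 0 + 4 * c ^ 3 * x ^ 1 + 6 * c ^ 2 * x ^ 2 + 4 * c * x ^ 3 + x ^ 4 := by ring
  simp_rw [h]
  have hi := integrable_pow_gaussianReal 0 v
  exact ((((hi 0).const_mul _).add ((hi 1).const_mul _)).add ((hi 2).const_mul _)).add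
    ((hi 3).const_mul _) |>.add (hi 4)

/-- The variance of a noncentral squared Gaussian variable. -/
lemma variance_const_add_sq_gaussianReal (v : ℝ≥0) (c : ℝ) :
    Var[fun x => (c + x) ^ 2; gaussianReal 0 v] = 2 * v ^ 2 + 4 * c ^ 2 * v := by
  have hi := integrable_pow_gaussianReal 0 v
  have h4 (x : ℝ) : ((c + x) ^ 2) ^ 2 =
      c ^ 4 * x ^ 0 + 4 * c ^ 3 * x ^ 1 + 6 * c ^ 2 * x ^ 2 + 4 * c * x ^ 3 + x ^ 4 := by ring
  have h2 (x : ℝ) : (c + x) ^ 2 = c ^ 2 * x ^ 0 + 2 * c * x ^ 1 + x ^ 2 := by ring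
  rw [variance_eq_sub (memLp_const_add_sq_gaussianReal v c)]
  simp only [Pi.pow_apply, h4]
  simp only [h2]
  rw [integral_add (by fun_prop) (hi 4), integral_add (by fun_prop) (by fun_prop),
    integral_add (by fun_prop) (by fun_prop), integral_add (by fun_prop) (by fun_prop),
    integral_add (by fun_prop) (hi 2), integral_add (by fun_prop) (by fun_prop)]
  simp only [integral_const_mul, integral_pow_gaussianReal_zero]
  simp [Function.iterate_succ_apply']
  ring

/-- A matrix with orthonormal columns preserves the Euclidean norm. -/
lemma sum_mulVec_sq {ι : Type*} [Fintype ι] [DecidableEq ι] {Q : Matrix ι ι ℝ} (hQ : Qᵀ * Q = 1)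
    (t : ι → ℝ) : ∑ i, (Q *ᵥ t) i ^ 2 = ∑ i, t i ^ 2 := by
  have : (Q *ᵥ t) ⬝ᵥ (Q *ᵥ t) = t ⬝ᵥ t := by
    rw [dotProduct_mulVec, ← mulVec_transpose, mulVec_mulVec, hQ, one_mulVec]
  simpa [dotProduct, sq] using this

/-- An i.i.d. centred Gaussian vector is invariant under orthogonal transformations. -/
lemma map_mulVec_pi_gaussianReal {ι : Type*} [Fintype ι] [DecidableEq ι] (v : ℝ≥0)
    {Q : Matrix ι ι ℝ} (hQ : Q * Qᵀ = 1) :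
    (Measure.pi fun _ : ι => gaussianReal 0 v).map (fun x => Q *ᵥ x) =
      Measure.pi fun _ : ι => gaussianReal 0 v := by
  have hmeas : Measurable fun x : ι → ℝ => Q *ᵥ x := by fun_prop
  have hlp : Measurable (WithLp.toLp 2 : (ι → ℝ) → EuclideanSpace ℝ ι) := by fun_prop
  have hchar (t : EuclideanSpace ℝ ι) :
      charFun (((Measure.pi fun _ : ι => gaussianReal 0 v).map fun x => Q *ᵥ x).map
        (WithLp.toLp 2)) t =
      charFun ((Measure.pi fun _ : ι => gaussianReal 0 v).map (WithLp.toLp 2))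
        (WithLp.toLp 2 (Qᵀ *ᵥ t.ofLp)) := by
    rw [Measure.map_map hlp hmeas, charFun_apply, charFun_apply,
      integral_map (by fun_prop) (by fun_prop), integral_map (by fun_prop) (by fun_prop)]
    congr! 5 with x
    simp [EuclideanSpace.inner_eq_star_dotProduct, dotProduct_mulVec, mulVec_transpose, dotProduct_comm]
  have heq : ((Measure.pi fun _ : ι => gaussianReal 0 v).map fun x => Q *ᵥ x).map
        (WithLp.toLp 2 : (ι → ℝ) → EuclideanSpace ℝ ι) =
      (Measure.pi fun _ : ι => gaussianReal 0 v).map (WithLp.toLp 2) := by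
    have := Measure.isProbabilityMeasure_map (μ := Measure.pi fun _ : ι => gaussianReal 0 v)
      hmeas.aemeasurable
    apply Measure.ext_of_charFun (E := EuclideanSpace ℝ ι)
    ext t
    rw [hchar]
    simp_rw [charFun_pi, charFun_gaussianReal, ← Complex.exp_sum]
    congr 1
    simp only [Complex.ofReal_zero, mul_zero, zero_mul, zero_sub, Finset.sum_neg_distrib,
      ← Finset.sum_div, ← Finset.mul_sum]
    have := sum_mulVec_sq (Q := Qᵀ) (by simpa using hQ) t.ofLp
    norm_cast
    rw [this]
  exact (MeasurableEquiv.toLp 2 (ι → ℝ)).map_measurableEquiv_injective heq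

/-- The variance of a quadratic form in a Gaussian vector, for a form diagonalized by an orthogonal
matrix. -/
lemma variance_quadratic_pi_gaussianReal {ι : Type*} [Fintype ι] [DecidableEq ι] (v : ℝ≥0)
    {Q : Matrix ι ι ℝ} (hQ : Q * Qᵀ = 1) (a f : ι → ℝ) :
    Var[fun ε => (f + ε) ⬝ᵥ ((Qᵀ * diagonal a * Q) *ᵥ (f + ε));
      Measure.pi fun _ : ι => gaussianReal 0 v] =
      ∑ i, a i ^ 2 * (2 * v ^ 2 + 4 * (Q *ᵥ f) i ^ 2 * v) := by
  have hform : (fun ε : ι → ℝ => (f + ε) ⬝ᵥ ((Qᵀ * diagonal a * Q) *ᵥ (f + ε))) =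
      (∑ i, fun z : ι → ℝ => a i * ((Q *ᵥ f) i + z i) ^ 2) ∘ fun ε => Q *ᵥ ε := by
    ext ε
    rw [← mulVec_mulVec, ← mulVec_mulVec, dotProduct_mulVec, vecMul_transpose, mulVec_add]
    simp only [dotProduct, mulVec_diagonal, Function.comp_apply, Finset.sum_apply, Pi.add_apply]
    exact Finset.sum_congr rfl fun i _ => by ring
  rw [hform, ← variance_map (by fun_prop) (by fun_prop), map_mulVec_pi_gaussianReal v hQ,
    variance_sum_pi (X := fun i x => a i * ((Q *ᵥ f) i + x) ^ 2)
      fun i => (memLp_const_add_sq_gaussianReal v _).const_mul _]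
  simp_rw [variance_const_mul, variance_const_add_sq_gaussianReal]

/-- The inverse of a positive shift of a positive semidefinite matrix is diagonal in its eigenbasis. -/
lemma exists_orthogonal_add_smul_one_inv {ι : Type*} [Fintype ι] [DecidableEq ι]
    {K : Matrix ι ι ℝ} (hK : K.PosSemidef) {c : ℝ} (hc : 0 < c) :
    ∃ (Q : Matrix ι ι ℝ) (d : ι → ℝ), Q * Qᵀ = 1 ∧ (∀ i, 0 ≤ d i) ∧
      (K + c • (1 : Matrix ι ι ℝ))⁻¹ = Qᵀ * diagonal (fun i => (d i + c)⁻¹) * Q := by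
  let U : Matrix ι ι ℝ := (hK.isHermitian.eigenvectorUnitary : Matrix ι ι ℝ)
  have hUU : Uᵀ * U = 1 := by
    simpa [U, star_eq_conjTranspose] using
      Unitary.coe_star_mul_self hK.isHermitian.eigenvectorUnitary
  have hUU' : U * Uᵀ = 1 := mul_eq_one_comm.mp hUU
  have hspec : K = U * diagonal hK.isHermitian.eigenvalues * Uᵀ := by
    have := hK.isHermitian.spectral_theorem
    simpa [U, Unitary.conjStarAlgAut_apply, star_eq_conjTranspose, Function.comp_def] using this
  refine ⟨Uᵀ, hK.isHermitian.eigenvalues, by simpa using hUU, hK.eigenvalues_nonneg, ?_⟩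
  have hshift : K + c • (1 : Matrix ι ι ℝ) =
      U * diagonal (fun i => hK.isHermitian.eigenvalues i + c) * Uᵀ := by
    rw [← diagonal_add, mul_add, add_mul, ← hspec, ← smul_one_eq_diagonal]
    simp [hUU']
  apply inv_eq_right_inv
  rw [hshift, transpose_transpose]
  calc _ = U * diagonal (fun i => hK.isHermitian.eigenvalues i + c) * (Uᵀ * U) *
        diagonal (fun i => (hK.isHermitian.eigenvalues i + c)⁻¹) * Uᵀ := by
          simp only [Matrix.mul_assoc]
    _ = 1 := by
      have hne (i : ι) : hK.isHermitian.eigenvalues i + c ≠ 0 :=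
        (add_pos_of_nonneg_of_pos (hK.eigenvalues_nonneg i) hc).ne'
      rw [hUU, Matrix.mul_one, Matrix.mul_assoc U, diagonal_mul_diagonal]
      simp [hne, hUU']

/-- With `Y = f + ε`, `ε` having i.i.d. `N(0,σ₀²)` coordinates, and
`σ̂²_n = λ·Yᵀ(K + nλ·I)⁻¹Y`, one has
`Var(σ̂²_n) ≤ 2σ₀⁴/n + 4σ₀²‖f‖²/n²` where `‖f‖` is the Euclidean norm. -/
theorem stmt14 (n : ℕ) (hn : 1 ≤ n) (K : Matrix (Fin n) (Fin n) ℝ) (hK : K.PosSemidef)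
    (lam : ℝ) (hlam : 0 < lam) (f : Fin n → ℝ) (σ₀ : ℝ) (hσ : 0 < σ₀) :
    variance
        (fun ε : Fin n → ℝ =>
          lam * ((f + ε) ⬝ᵥ ((K + ((n : ℝ) * lam) • (1 : Matrix (Fin n) (Fin n) ℝ))⁻¹ *ᵥ (f + ε))))
        (Measure.pi fun _ : Fin n => gaussianReal 0 (Real.toNNReal (σ₀ ^ 2)))
      ≤ 2 * σ₀ ^ 4 / n + 4 * σ₀ ^ 2 * (∑ i, f i ^ 2) / (n : ℝ) ^ 2 := by
  have hn0 : (0 : ℝ) < n := by exact_mod_cast hn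
  obtain ⟨Q, d, hQ, hd, hinv⟩ := exists_orthogonal_add_smul_one_inv hK (mul_pos hn0 hlam)
  have hv : ((σ₀ ^ 2).toNNReal : ℝ) = σ₀ ^ 2 := Real.coe_toNNReal _ (sq_nonneg _)
  rw [variance_const_mul, hinv, variance_quadratic_pi_gaussianReal _ hQ, Finset.mul_sum, hv]
  have hcoef (i : Fin n) : lam ^ 2 * ((d i + n * lam)⁻¹) ^ 2 ≤ 1 / (n : ℝ) ^ 2 := by
    have hle : lam * (d i + n * lam)⁻¹ ≤ 1 / n := by
      rw [← div_eq_mul_inv, div_le_div_iff₀ (add_pos_of_nonneg_of_pos (hd i) (by positivity)) hn0]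
      linarith [hd i]
    have h0 : 0 ≤ lam * (d i + n * lam)⁻¹ :=
      mul_nonneg hlam.le (inv_nonneg.mpr (add_nonneg (hd i) (by positivity)))
    calc _ = (lam * (d i + n * lam)⁻¹) ^ 2 := by ring
      _ ≤ (1 / (n : ℝ)) ^ 2 := pow_le_pow_left₀ h0 hle 2
      _ = _ := by ring
  calc _ ≤ ∑ i, 1 / (n : ℝ) ^ 2 * (2 * (σ₀ ^ 2) ^ 2 + 4 * (Q *ᵥ f) i ^ 2 * σ₀ ^ 2) := by
        refine Finset.sum_le_sum fun i _ => ?_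
        rw [← mul_assoc]
        exact mul_le_mul_of_nonneg_right (hcoef i) (by positivity)
    _ = 2 * σ₀ ^ 4 / n + 4 * σ₀ ^ 2 * (∑ i, f i ^ 2) / (n : ℝ) ^ 2 := by
        rw [← sum_mulVec_sq (mul_eq_one_comm.mp hQ) f]
        simp only [← Finset.mul_sum, Finset.sum_add_distrib, ← Finset.sum_mul, Finset.sum_const,
          Finset.card_univ, Fintype.card_fin, nsmul_eq_mul]
        field_simp
end
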